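/- (Sandwich Lemma) For every λ > 0 there exists K < ∞ such that the following holds: let n ≥ 1, 0 ≤ i ≤ n, let φ₀, …, φ_{n−1}, γ ∈ D³([0,1]) satisfy ‖γ‖₁ + Σ_j ‖φ_j‖₁ ≤ λ, and set φ = φ_{n−1} ∘ ⋯ ∘ φ₀ and ψ = φ_{n−1} ∘ ⋯ ∘ φ_i ∘ γ ∘ φ_{i−1} ∘ ⋯ ∘ φ₀ (with the convention that an empty composition is the identity). Then sup_{x∈[0,1]} |Nψ(x) − Nφ(x)| ≤ K · sup_{x∈[0,1]} |Nγ(x)|. -/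

import Mathlib

open Set Filter Topology

noncomputable section

/-- Derivative within `[0,1]`. -/
def derivI (φ : ℝ → ℝ) : ℝ → ℝ := derivWithin φ (Icc 0 1)

/-- The nonlinearity `Nφ = (log φ')' = φ''/φ'` (with derivatives taken within `[0,1]`). -/
def nonlin (φ : ℝ → ℝ) : ℝ → ℝ := fun x => derivI (derivI φ) x / derivI φ x

/-- The `C⁰`-nonlinearity norm `‖φ‖ = sup_{x ∈ [0,1]} |Nφ(x)|`. -/
def nlNorm (φ : ℝ → ℝ) : ℝ := ⨆ x : Icc (0 : ℝ) 1, |nonlin φ x.1|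

/-- The `C¹`-nonlinearity norm `‖φ‖₁ = max (sup |Nφ|, sup |(Nφ)'|)`. -/
def nlNorm1 (φ : ℝ → ℝ) : ℝ :=
  max (nlNorm φ) (⨆ x : Icc (0 : ℝ) 1, |derivI (nonlin φ) x.1|)

/-- `φ ∈ D^k([0,1])`: an orientation-preserving `C^k` diffeomorphism of `[0,1]`
onto itself. -/
def IsDk (k : ℕ) (φ : ℝ → ℝ) : Prop :=
  ContDiffOn ℝ k φ (Icc 0 1) ∧ φ 0 = 0 ∧ φ 1 = 1 ∧ StrictMonoOn φ (Icc 0 1) ∧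
    MapsTo φ (Icc 0 1) (Icc 0 1) ∧ ∀ x ∈ Icc (0 : ℝ) 1, 0 < derivI φ x

/-- `compFrom φs j m = φ_{j+m-1} ∘ ⋯ ∘ φ_{j+1} ∘ φ_j` (and the identity for `m = 0`). -/
def compFrom (φs : ℕ → ℝ → ℝ) (j : ℕ) : ℕ → ℝ → ℝ
  | 0 => id
  | (m + 1) => φs (j + m) ∘ compFrom φs j m

/-! By the chain rule `N(f ∘ g) = (Nf ∘ g) g' + Ng`, precomposing with a fixed `A` multiplies a
difference of nonlinearities by `A'`. It is therefore enough to compare `N(B ∘ γ)` with `NB`, where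
`A` and `B` are the inner and outer parts of the composition, and here
`N(B ∘ γ) - NB = (NB ∘ γ - NB) γ' + NB (γ' - 1) + Nγ`.
Since `γ` fixes `0` and `1`, both `γ - id` and `γ' - 1` are `O(‖γ‖)`, so what remains is to bound
`‖B‖₁` and `A'` independently of the number of factors. The derivative of a composition is at most
`exp (∑ ‖φ_j‖)`, because `|log φ'| ≤ ‖φ‖`; the chain rule then makes the nonlinearity and its
derivative accumulate additively over the factors, with weights bounded by powers of this
exponential. -/

theorem abs_le_iSup_of_continuousOn {X : Type*} [TopologicalSpace X] {s : Set X}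
    (hs : IsCompact s) {f : X → ℝ} (hf : ContinuousOn f s) {x : X} (hx : x ∈ s) :
    |f x| ≤ ⨆ y : s, |f y| :=
  le_ciSup_set (hs.bddAbove_image hf.abs) hx

theorem abs_sub_le_of_hasDerivWithinAt_Icc {f f' : ℝ → ℝ} {C x y : ℝ}
    (hf : ∀ z ∈ Icc (0 : ℝ) 1, HasDerivWithinAt f (f' z) (Icc 0 1) z)
    (bound : ∀ z ∈ Icc (0 : ℝ) 1, |f' z| ≤ C) (hx : x ∈ Icc (0 : ℝ) 1) (hy : y ∈ Icc (0 : ℝ) 1) :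
    |f x - f y| ≤ C :=
  calc |f x - f y| ≤ C * |x - y| :=
        (convex_Icc 0 1).norm_image_sub_le_of_norm_hasDerivWithin_le hf bound hy hx
    _ ≤ C := mul_le_of_le_one_right ((abs_nonneg _).trans (bound x hx))
        (Real.dist_le_of_mem_Icc_01 hx hy)

theorem nlNorm_nonneg (φ : ℝ → ℝ) : 0 ≤ nlNorm φ :=
  Real.iSup_nonneg fun _ => abs_nonneg _

theorem nlNorm_le_nlNorm1 (φ : ℝ → ℝ) : nlNorm φ ≤ nlNorm1 φ :=
  le_max_left _ _

theorem nlNorm1_nonneg (φ : ℝ → ℝ) : 0 ≤ nlNorm1 φ :=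
  (nlNorm_nonneg φ).trans (nlNorm_le_nlNorm1 φ)

theorem derivI_id {x : ℝ} (hx : x ∈ Icc (0 : ℝ) 1) : derivI id x = 1 :=
  derivWithin_id x _ (uniqueDiffOn_Icc_zero_one x hx)

theorem derivI_congr {f g : ℝ → ℝ} (hfg : EqOn f g (Icc 0 1)) {x : ℝ} (hx : x ∈ Icc (0 : ℝ) 1) :
    derivI f x = derivI g x :=
  derivWithin_congr hfg (hfg hx)

theorem derivI_eq_zero_of_forall_eq {f : ℝ → ℝ} {c : ℝ} (hf : ∀ y ∈ Icc (0 : ℝ) 1, f y = c) {x : ℝ}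
    (hx : x ∈ Icc (0 : ℝ) 1) : derivI f x = 0 := by
  rw [derivI_congr hf hx, derivI, derivWithin_fun_const, Pi.zero_apply]

theorem nonlin_id {x : ℝ} (hx : x ∈ Icc (0 : ℝ) 1) : nonlin id x = 0 := by
  rw [nonlin, derivI_eq_zero_of_forall_eq (fun _ => derivI_id) hx, zero_div]

namespace IsDk

variable {k l : ℕ} {φ f g : ℝ → ℝ} {x : ℝ}

theorem of_le (hφ : IsDk l φ) (hkl : k ≤ l) : IsDk k φ :=
  ⟨hφ.1.of_le (mod_cast hkl), hφ.2⟩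

theorem contDiffOn (hφ : IsDk k φ) : ContDiffOn ℝ k φ (Icc 0 1) :=
  hφ.1

theorem map_zero (hφ : IsDk k φ) : φ 0 = 0 :=
  hφ.2.1

theorem map_one (hφ : IsDk k φ) : φ 1 = 1 :=
  hφ.2.2.1

theorem strictMonoOn (hφ : IsDk k φ) : StrictMonoOn φ (Icc 0 1) :=
  hφ.2.2.2.1

theorem mapsTo (hφ : IsDk k φ) : MapsTo φ (Icc 0 1) (Icc 0 1) :=
  hφ.2.2.2.2.1

theorem derivI_pos (hφ : IsDk k φ) (hx : x ∈ Icc (0 : ℝ) 1) : 0 < derivI φ x :=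
  hφ.2.2.2.2.2 x hx

theorem contDiffOn_derivI (hφ : IsDk (k + 1) φ) : ContDiffOn ℝ k (derivI φ) (Icc 0 1) :=
  hφ.contDiffOn.derivWithin uniqueDiffOn_Icc_zero_one (by norm_cast)

theorem contDiffOn_derivI_derivI (hφ : IsDk (k + 2) φ) :
    ContDiffOn ℝ k (derivI (derivI φ)) (Icc 0 1) :=
  hφ.contDiffOn_derivI.derivWithin uniqueDiffOn_Icc_zero_one (by norm_cast)

theorem contDiffOn_nonlin (hφ : IsDk (k + 2) φ) : ContDiffOn ℝ k (nonlin φ) (Icc 0 1) :=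
  hφ.contDiffOn_derivI_derivI.div (hφ.of_le (Nat.le_succ _)).contDiffOn_derivI
    fun _ hx => (hφ.derivI_pos hx).ne'

theorem hasDerivWithinAt (hφ : IsDk (k + 1) φ) (hx : x ∈ Icc (0 : ℝ) 1) :
    HasDerivWithinAt φ (derivI φ x) (Icc 0 1) x :=
  (hφ.contDiffOn.differentiableOn (by norm_cast) x hx).hasDerivWithinAt

theorem hasDerivWithinAt_derivI (hφ : IsDk (k + 2) φ) (hx : x ∈ Icc (0 : ℝ) 1) :
    HasDerivWithinAt (derivI φ) (derivI (derivI φ) x) (Icc 0 1) x :=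
  (hφ.contDiffOn_derivI.differentiableOn (by norm_cast) x hx).hasDerivWithinAt

theorem hasDerivWithinAt_nonlin (hφ : IsDk (k + 3) φ) (hx : x ∈ Icc (0 : ℝ) 1) :
    HasDerivWithinAt (nonlin φ) (derivI (nonlin φ) x) (Icc 0 1) x :=
  (hφ.contDiffOn_nonlin.differentiableOn (by norm_cast) x hx).hasDerivWithinAt

theorem derivI_derivI (hφ : IsDk k φ) (hx : x ∈ Icc (0 : ℝ) 1) :
    derivI (derivI φ) x = nonlin φ x * derivI φ x :=
  (div_mul_cancel₀ _ (hφ.derivI_pos hx).ne').symm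

theorem abs_nonlin_le_nlNorm (hφ : IsDk (k + 2) φ) (hx : x ∈ Icc (0 : ℝ) 1) :
    |nonlin φ x| ≤ nlNorm φ :=
  abs_le_iSup_of_continuousOn isCompact_Icc hφ.contDiffOn_nonlin.continuousOn hx

theorem abs_derivI_nonlin_le_nlNorm1 (hφ : IsDk (k + 3) φ) (hx : x ∈ Icc (0 : ℝ) 1) :
    |derivI (nonlin φ) x| ≤ nlNorm1 φ := by
  have hcont : ContDiffOn ℝ k (derivI (nonlin φ)) (Icc 0 1) :=
    hφ.contDiffOn_nonlin.derivWithin uniqueDiffOn_Icc_zero_one (by norm_cast)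
  exact (abs_le_iSup_of_continuousOn isCompact_Icc hcont.continuousOn hx).trans (le_max_right _ _)

theorem exists_derivI_eq_one (hφ : IsDk (k + 1) φ) : ∃ c ∈ Icc (0 : ℝ) 1, derivI φ c = 1 := by
  obtain ⟨c, hc, hslope⟩ := exists_hasDerivAt_eq_slope φ (derivI φ) one_pos
    hφ.contDiffOn.continuousOn fun z hz =>
      (hφ.hasDerivWithinAt (Ioo_subset_Icc_self hz)).hasDerivAt (Icc_mem_nhds hz.1 hz.2)
  refine ⟨c, Ioo_subset_Icc_self hc, ?_⟩
  rw [hslope, hφ.map_zero, hφ.map_one, sub_zero, div_one]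

theorem abs_log_derivI_le (hφ : IsDk (k + 2) φ) (hx : x ∈ Icc (0 : ℝ) 1) :
    |Real.log (derivI φ x)| ≤ nlNorm φ := by
  obtain ⟨c, hc, hc_one⟩ := hφ.exists_derivI_eq_one
  simpa only [hc_one, Real.log_one, sub_zero] using
    abs_sub_le_of_hasDerivWithinAt_Icc (f := fun z => Real.log (derivI φ z)) (f' := nonlin φ)
      (fun z hz => (hφ.hasDerivWithinAt_derivI hz).log (hφ.derivI_pos hz).ne')
      (fun z hz => hφ.abs_nonlin_le_nlNorm hz) hx hc

theorem derivI_le_exp_nlNorm (hφ : IsDk (k + 2) φ) (hx : x ∈ Icc (0 : ℝ) 1) :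
    derivI φ x ≤ Real.exp (nlNorm φ) :=
  (Real.log_le_iff_le_exp (hφ.derivI_pos hx)).1 (le_of_abs_le (hφ.abs_log_derivI_le hx))

theorem abs_derivI_sub_one_le (hφ : IsDk (k + 2) φ) (hx : x ∈ Icc (0 : ℝ) 1) :
    |derivI φ x - 1| ≤ nlNorm φ * Real.exp (nlNorm φ) := by
  obtain ⟨c, hc, hc_one⟩ := hφ.exists_derivI_eq_one
  rw [← hc_one]
  refine abs_sub_le_of_hasDerivWithinAt_Icc (fun z hz => hφ.hasDerivWithinAt_derivI hz)
    (fun z hz => ?_) hx hc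
  rw [hφ.derivI_derivI hz, abs_mul, abs_of_pos (hφ.derivI_pos hz)]
  exact mul_le_mul (hφ.abs_nonlin_le_nlNorm hz) (hφ.derivI_le_exp_nlNorm hz)
    (hφ.derivI_pos hz).le (nlNorm_nonneg φ)

theorem abs_sub_self_le (hφ : IsDk (k + 2) φ) (hx : x ∈ Icc (0 : ℝ) 1) :
    |φ x - x| ≤ nlNorm φ * Real.exp (nlNorm φ) := by
  simpa only [hφ.map_zero, sub_zero] using
    abs_sub_le_of_hasDerivWithinAt_Icc (f := fun z => φ z - z) (f' := fun z => derivI φ z - 1)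
      (fun z hz => (hφ.hasDerivWithinAt hz).sub (hasDerivWithinAt_id z _))
      (fun z hz => hφ.abs_derivI_sub_one_le hz) hx (left_mem_Icc.2 zero_le_one)

theorem derivI_comp (hf : IsDk (k + 1) f) (hg : IsDk (l + 1) g) (hx : x ∈ Icc (0 : ℝ) 1) :
    derivI (f ∘ g) x = derivI f (g x) * derivI g x :=
  ((hf.hasDerivWithinAt (hg.mapsTo hx)).comp x (hg.hasDerivWithinAt hx) hg.mapsTo).derivWithin
    (uniqueDiffOn_Icc_zero_one x hx)

theorem nonlin_comp (hf : IsDk (k + 2) f) (hg : IsDk (l + 2) g) (hx : x ∈ Icc (0 : ℝ) 1) :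
    nonlin (f ∘ g) x = nonlin f (g x) * derivI g x + nonlin g x := by
  have hderiv : EqOn (derivI (f ∘ g)) (fun y => derivI f (g y) * derivI g y) (Icc 0 1) :=
    fun _ => derivI_comp hf hg
  have hderiv₂ : derivI (derivI (f ∘ g)) x =
      derivI (derivI f) (g x) * derivI g x * derivI g x +
        derivI f (g x) * derivI (derivI g) x := by
    rw [derivI_congr hderiv hx]
    exact (((hf.hasDerivWithinAt_derivI (hg.mapsTo hx)).comp x
      (hg.hasDerivWithinAt hx) hg.mapsTo).mul
        (hg.hasDerivWithinAt_derivI hx)).derivWithin (uniqueDiffOn_Icc_zero_one x hx)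
  have hf_ne := (hf.derivI_pos (hg.mapsTo hx)).ne'
  have hg_ne := (hg.derivI_pos hx).ne'
  rw [nonlin, hderiv₂, hderiv hx, nonlin, nonlin]
  field_simp

theorem derivI_nonlin_comp (hf : IsDk (k + 3) f) (hg : IsDk (l + 3) g)
    (hx : x ∈ Icc (0 : ℝ) 1) :
    derivI (nonlin (f ∘ g)) x = derivI (nonlin f) (g x) * derivI g x ^ 2 +
      nonlin f (g x) * (nonlin g x * derivI g x) + derivI (nonlin g) x := by
  have hnonlin : EqOn (nonlin (f ∘ g)) (fun y => nonlin f (g y) * derivI g y + nonlin g y)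
      (Icc 0 1) := fun _ => nonlin_comp hf hg
  rw [derivI_congr hnonlin hx, ← hg.derivI_derivI hx, sq, ← mul_assoc]
  exact ((((hf.hasDerivWithinAt_nonlin (hg.mapsTo hx)).comp x
    (hg.hasDerivWithinAt hx) hg.mapsTo).mul
      (hg.hasDerivWithinAt_derivI hx)).add
        (hg.hasDerivWithinAt_nonlin hx)).derivWithin (uniqueDiffOn_Icc_zero_one x hx)

protected theorem id (k : ℕ) : IsDk k id :=
  ⟨contDiffOn_id, rfl, rfl, strictMonoOn_id, mapsTo_id _,
    fun _ hx => (derivI_id hx).symm ▸ one_pos⟩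

theorem comp (hf : IsDk (k + 1) f) (hg : IsDk (k + 1) g) : IsDk (k + 1) (f ∘ g) :=
  ⟨hf.contDiffOn.comp hg.contDiffOn hg.mapsTo, by simp [hg.map_zero, hf.map_zero],
    by simp [hg.map_one, hf.map_one], hf.strictMonoOn.comp hg.strictMonoOn hg.mapsTo,
    hf.mapsTo.comp hg.mapsTo, fun _ hx =>
      derivI_comp hf hg hx ▸ mul_pos (hf.derivI_pos (hg.mapsTo hx)) (hg.derivI_pos hx)⟩

theorem abs_nonlin_comp_sub_le {B γ : ℝ → ℝ} (hB : IsDk (k + 3) B) (hγ : IsDk (l + 2) γ)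
    (hx : x ∈ Icc (0 : ℝ) 1) :
    |nonlin (B ∘ γ) x - nonlin B x| ≤
      (nlNorm1 B * (Real.exp (nlNorm γ) ^ 2 + Real.exp (nlNorm γ)) + 1) * nlNorm γ := by
  have hB_nonneg := nlNorm1_nonneg B
  have hγ_nonneg := nlNorm_nonneg γ
  have hdisplacement : |nonlin B (γ x) - nonlin B x| ≤
      nlNorm1 B * (nlNorm γ * Real.exp (nlNorm γ)) :=
    calc |nonlin B (γ x) - nonlin B x| ≤ nlNorm1 B * |γ x - x| :=
          (convex_Icc 0 1).norm_image_sub_le_of_norm_hasDerivWithin_le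
            (fun _ => hB.hasDerivWithinAt_nonlin) (fun _ => hB.abs_derivI_nonlin_le_nlNorm1)
            hx (hγ.mapsTo hx)
      _ ≤ nlNorm1 B * (nlNorm γ * Real.exp (nlNorm γ)) := by
          gcongr
          exact hγ.abs_sub_self_le hx
  have hB_le : |nonlin B x| ≤ nlNorm1 B :=
    (hB.abs_nonlin_le_nlNorm hx).trans (nlNorm_le_nlNorm1 B)
  have hγ' : |derivI γ x| ≤ Real.exp (nlNorm γ) :=
    (abs_of_pos (hγ.derivI_pos hx)).trans_le (hγ.derivI_le_exp_nlNorm hx)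
  calc |nonlin (B ∘ γ) x - nonlin B x|
      = |(nonlin B (γ x) - nonlin B x) * derivI γ x + nonlin B x * (derivI γ x - 1)
          + nonlin γ x| := by
        rw [hB.nonlin_comp hγ hx]
        ring_nf
    _ ≤ |nonlin B (γ x) - nonlin B x| * |derivI γ x| + |nonlin B x| * |derivI γ x - 1|
          + |nonlin γ x| := by
        simpa only [abs_mul] using abs_add_three
          ((nonlin B (γ x) - nonlin B x) * derivI γ x) (nonlin B x * (derivI γ x - 1)) (nonlin γ x)
    _ ≤ nlNorm1 B * (nlNorm γ * Real.exp (nlNorm γ)) * Real.exp (nlNorm γ)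
          + nlNorm1 B * (nlNorm γ * Real.exp (nlNorm γ)) + nlNorm γ := by
        gcongr
        · exact hγ.abs_derivI_sub_one_le hx
        · exact hγ.abs_nonlin_le_nlNorm hx
    _ = _ := by ring

theorem nonlin_comp_sub_nonlin_comp {A : ℝ → ℝ} (hf : IsDk (k + 2) f) (hg : IsDk (k + 2) g)
    (hA : IsDk (l + 2) A) (hx : x ∈ Icc (0 : ℝ) 1) :
    nonlin (f ∘ A) x - nonlin (g ∘ A) x = (nonlin f (A x) - nonlin g (A x)) * derivI A x := by
  rw [hf.nonlin_comp hA hx, hg.nonlin_comp hA hx]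
  ring

theorem abs_nonlin_sandwich_sub_le {A B γ : ℝ → ℝ} (hB : IsDk (k + 3) B)
    (hγ : IsDk (k + 2) γ) (hA : IsDk (l + 2) A) (hx : x ∈ Icc (0 : ℝ) 1) :
    |nonlin (B ∘ γ ∘ A) x - nonlin (B ∘ A) x| ≤
      (nlNorm1 B * (Real.exp (nlNorm γ) ^ 2 + Real.exp (nlNorm γ)) + 1) * nlNorm γ
        * derivI A x := by
  have hB₂ : IsDk (k + 2) B := hB.of_le (Nat.le_succ _)
  rw [← Function.comp_assoc, nonlin_comp_sub_nonlin_comp (hB₂.comp hγ) hB₂ hA hx, abs_mul,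
    abs_of_pos (hA.derivI_pos hx)]
  exact mul_le_mul_of_nonneg_right (abs_nonlin_comp_sub_le hB hγ (hA.mapsTo hx))
    (hA.derivI_pos hx).le

end IsDk

section compFrom

variable {k i m : ℕ} {φs : ℕ → ℝ → ℝ} {x : ℝ}

theorem compFrom_add (φs : ℕ → ℝ → ℝ) (i m l : ℕ) :
    compFrom φs i (m + l) = compFrom φs (i + m) l ∘ compFrom φs i m := by
  induction l with
  | zero => rfl
  | succ l ih => rw [← add_assoc, compFrom, ih, compFrom, ← add_assoc, Function.comp_assoc]

theorem isDk_compFrom (hφs : ∀ j < m, IsDk (k + 1) (φs (i + j))) :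
    IsDk (k + 1) (compFrom φs i m) := by
  induction m with
  | zero => exact IsDk.id _
  | succ m ih => exact (hφs m m.lt_succ_self).comp (ih fun j hj => hφs j (hj.trans m.lt_succ_self))

theorem derivI_compFrom_le (hφs : ∀ j < m, IsDk (k + 2) (φs (i + j))) (hx : x ∈ Icc (0 : ℝ) 1) :
    derivI (compFrom φs i m) x ≤ Real.exp (∑ j ∈ Finset.range m, nlNorm (φs (i + j))) := by
  induction m with
  | zero => simp [compFrom, derivI_id hx]
  | succ m ih =>
    have hfirst : ∀ j < m, IsDk (k + 2) (φs (i + j)) := fun j hj => hφs j (hj.trans m.lt_succ_self)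
    have hlast := hφs m m.lt_succ_self
    have hcomp := isDk_compFrom hfirst
    rw [compFrom, hlast.derivI_comp hcomp hx, Finset.sum_range_succ, Real.exp_add, mul_comm]
    exact mul_le_mul (ih hfirst) (hlast.derivI_le_exp_nlNorm (hcomp.mapsTo hx))
      (hlast.derivI_pos (hcomp.mapsTo hx)).le (Real.exp_pos _).le

theorem abs_derivI_compFrom_le (hφs : ∀ j < m, IsDk (k + 2) (φs (i + j)))
    (hx : x ∈ Icc (0 : ℝ) 1) {s : ℝ} (hs : ∑ j ∈ Finset.range m, nlNorm (φs (i + j)) ≤ s) :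
    |derivI (compFrom φs i m) x| ≤ Real.exp s := by
  rw [abs_of_pos ((isDk_compFrom hφs).derivI_pos hx)]
  exact (derivI_compFrom_le hφs hx).trans (Real.exp_le_exp.2 hs)

theorem abs_nonlin_compFrom_le (hφs : ∀ j < m, IsDk (k + 2) (φs (i + j)))
    (hx : x ∈ Icc (0 : ℝ) 1) {s : ℝ} (hs : ∑ j ∈ Finset.range m, nlNorm (φs (i + j)) ≤ s) :
    |nonlin (compFrom φs i m) x| ≤
      Real.exp s * ∑ j ∈ Finset.range m, nlNorm (φs (i + j)) := by
  induction m with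
  | zero => simp [compFrom, nonlin_id hx]
  | succ m ih =>
    have hfirst : ∀ j < m, IsDk (k + 2) (φs (i + j)) := fun j hj => hφs j (hj.trans m.lt_succ_self)
    have hlast := hφs m m.lt_succ_self
    have hcomp := isDk_compFrom hfirst
    rw [Finset.sum_range_succ] at hs ⊢
    have hs_first := (le_add_of_nonneg_right (nlNorm_nonneg _)).trans hs
    have hderiv := abs_derivI_compFrom_le hfirst hx hs_first
    rw [compFrom, hlast.nonlin_comp hcomp hx]
    calc _ ≤ |nonlin (φs (i + m)) (compFrom φs i m x)| * |derivI (compFrom φs i m) x|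
          + |nonlin (compFrom φs i m) x| := by
          rw [← abs_mul]
          exact abs_add_le _ _
      _ ≤ nlNorm (φs (i + m)) * Real.exp s
          + Real.exp s * ∑ j ∈ Finset.range m, nlNorm (φs (i + j)) := by
          gcongr
          · exact nlNorm_nonneg _
          · exact hlast.abs_nonlin_le_nlNorm (hcomp.mapsTo hx)
          · exact ih hfirst hs_first
      _ = _ := by ring

theorem abs_derivI_nonlin_compFrom_le (hφs : ∀ j < m, IsDk (k + 3) (φs (i + j)))
    (hx : x ∈ Icc (0 : ℝ) 1) {s : ℝ} (hs : ∑ j ∈ Finset.range m, nlNorm1 (φs (i + j)) ≤ s) :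
    |derivI (nonlin (compFrom φs i m)) x| ≤
      Real.exp s ^ 2 * (1 + s) * ∑ j ∈ Finset.range m, nlNorm1 (φs (i + j)) := by
  induction m with
  | zero => simp [compFrom, derivI_eq_zero_of_forall_eq (fun _ => nonlin_id) hx]
  | succ m ih =>
    have hfirst : ∀ j < m, IsDk (k + 3) (φs (i + j)) := fun j hj => hφs j (hj.trans m.lt_succ_self)
    have hlast := hφs m m.lt_succ_self
    have hcomp := isDk_compFrom hfirst
    rw [Finset.sum_range_succ] at hs ⊢
    have hs_first := (le_add_of_nonneg_right (nlNorm1_nonneg _)).trans hs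
    have hs_nlNorm := (Finset.sum_le_sum fun j _ => nlNorm_le_nlNorm1 (φs (i + j))).trans hs_first
    have hderiv := abs_derivI_compFrom_le hfirst hx hs_nlNorm
    have hnonlin : |nonlin (compFrom φs i m) x| ≤ Real.exp s * s :=
      (abs_nonlin_compFrom_le hfirst hx hs_nlNorm).trans (by gcongr)
    have hlast_nonlin : |nonlin (φs (i + m)) (compFrom φs i m x)| ≤ nlNorm1 (φs (i + m)) :=
      (hlast.abs_nonlin_le_nlNorm (hcomp.mapsTo hx)).trans (nlNorm_le_nlNorm1 _)
    have hlast_deriv := hlast.abs_derivI_nonlin_le_nlNorm1 (hcomp.mapsTo hx)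
    have hlast_nonneg := nlNorm1_nonneg (φs (i + m))
    rw [compFrom, hlast.derivI_nonlin_comp hcomp hx]
    refine (abs_add_three _ _ _).trans ?_
    simp only [abs_mul, abs_pow]
    calc _ ≤ nlNorm1 (φs (i + m)) * Real.exp s ^ 2
          + nlNorm1 (φs (i + m)) * (Real.exp s * s * Real.exp s)
          + Real.exp s ^ 2 * (1 + s) * ∑ j ∈ Finset.range m, nlNorm1 (φs (i + j)) := by
          gcongr
          · exact (abs_nonneg _).trans hnonlin
          · exact ih hfirst hs_first
      _ = _ := by ring

theorem nlNorm1_compFrom_le (hφs : ∀ j < m, IsDk (k + 3) (φs (i + j))) {s : ℝ}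
    (hs : ∑ j ∈ Finset.range m, nlNorm1 (φs (i + j)) ≤ s) :
    nlNorm1 (compFrom φs i m) ≤ Real.exp s ^ 2 * (1 + s) * s := by
  have hsum_nonneg : 0 ≤ ∑ j ∈ Finset.range m, nlNorm1 (φs (i + j)) :=
    Finset.sum_nonneg fun _ _ => nlNorm1_nonneg _
  have hs_nonneg : 0 ≤ s := hsum_nonneg.trans hs
  have hs_nlNorm := (Finset.sum_le_sum fun j _ => nlNorm_le_nlNorm1 (φs (i + j))).trans hs
  have hexp : Real.exp s ≤ Real.exp s ^ 2 * (1 + s) :=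
    (le_self_pow₀ (Real.one_le_exp hs_nonneg) two_ne_zero).trans
      (le_mul_of_one_le_right (by positivity) (le_add_of_nonneg_right hs_nonneg))
  refine max_le (ciSup_le fun ⟨x, hx⟩ => ?_) (ciSup_le fun ⟨x, hx⟩ => ?_)
  · exact (abs_nonlin_compFrom_le hφs hx hs_nlNorm).trans
      (mul_le_mul hexp hs_nlNorm (Finset.sum_nonneg fun _ _ => nlNorm_nonneg _) (by positivity))
  · exact (abs_derivI_nonlin_compFrom_le hφs hx hs).trans (by gcongr)

/-- The constant `K` of the sandwich lemma as a function of the total nonlinearity `s`: the last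
factor bounds the derivative of the inner composition, and `exp (2 s) (1 + s) s` bounds the
`C¹`-nonlinearity norm of the outer one. -/
def sandwichConst (s : ℝ) : ℝ :=
  (Real.exp s ^ 2 * (1 + s) * s * (Real.exp s ^ 2 + Real.exp s) + 1) * Real.exp s

theorem abs_nonlin_compFrom_sandwich_sub_le {γ : ℝ → ℝ} {s : ℝ}
    (hinner : ∀ j < i, IsDk 2 (φs j)) (houter : ∀ j < m, IsDk 3 (φs (i + j))) (hγ : IsDk 2 γ)
    (hinner_le : ∑ j ∈ Finset.range i, nlNorm (φs j) ≤ s)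
    (houter_le : ∑ j ∈ Finset.range m, nlNorm1 (φs (i + j)) ≤ s) (hγ_le : nlNorm γ ≤ s)
    (hx : x ∈ Icc (0 : ℝ) 1) :
    |nonlin (compFrom φs i m ∘ γ ∘ compFrom φs 0 i) x - nonlin (compFrom φs 0 (i + m)) x| ≤
      sandwichConst s * nlNorm γ := by
  have hγ_nonneg := nlNorm_nonneg γ
  have hs := hγ_nonneg.trans hγ_le
  have hinner₀ : ∀ j < i, IsDk 2 (φs (0 + j)) := by simpa only [zero_add] using hinner
  have hA := isDk_compFrom hinner₀
  have hA' : derivI (compFrom φs 0 i) x ≤ Real.exp s :=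
    le_of_abs_le (abs_derivI_compFrom_le hinner₀ hx (by simpa only [zero_add] using hinner_le))
  have hB_le := nlNorm1_compFrom_le houter houter_le
  rw [compFrom_add, zero_add]
  calc _ ≤ _ := (isDk_compFrom houter).abs_nonlin_sandwich_sub_le hγ hA hx
    _ ≤ (Real.exp s ^ 2 * (1 + s) * s * (Real.exp s ^ 2 + Real.exp s) + 1) * nlNorm γ
        * Real.exp s := by
      gcongr
      exact (hA.derivI_pos hx).le
    _ = sandwichConst s * nlNorm γ := mul_right_comm _ _ _

end compFrom

theorem sandwich_lemma_general {lam : ℝ} {n i : ℕ} (hin : i ≤ n) {φs : ℕ → ℝ → ℝ} {γ : ℝ → ℝ}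
    (hinner : ∀ j < i, IsDk 2 (φs j)) (houter : ∀ j, i ≤ j → j < n → IsDk 3 (φs j))
    (hγ : IsDk 2 γ)
    (hsum : nlNorm γ +
      (∑ j ∈ Finset.range i, nlNorm (φs j) + ∑ j ∈ Finset.Ico i n, nlNorm1 (φs j)) ≤ lam) :
    (⨆ x : Icc (0 : ℝ) 1,
      |nonlin (compFrom φs i (n - i) ∘ γ ∘ compFrom φs 0 i) x.1 -
        nonlin (compFrom φs 0 n) x.1|) ≤ sandwichConst lam * nlNorm γ := by
  obtain ⟨m, rfl⟩ := Nat.exists_eq_add_of_le hin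
  simp only [Finset.sum_Ico_eq_sum_range, Nat.add_sub_cancel_left] at hsum ⊢
  have hγ_nonneg := nlNorm_nonneg γ
  have hinner_nonneg : 0 ≤ ∑ j ∈ Finset.range i, nlNorm (φs j) :=
    Finset.sum_nonneg fun _ _ => nlNorm_nonneg _
  have houter_nonneg : 0 ≤ ∑ j ∈ Finset.range m, nlNorm1 (φs (i + j)) :=
    Finset.sum_nonneg fun _ _ => nlNorm1_nonneg _
  exact ciSup_le fun ⟨x, hx⟩ => abs_nonlin_compFrom_sandwich_sub_le hinner
    (fun j hj => houter _ (Nat.le_add_right i j) (Nat.add_lt_add_left hj i)) hγ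
    (by linarith) (by linarith) (by linarith) hx

/-- Sandwich Lemma: for every `λ > 0` there is `K` such that
sandwiching a diffeomorphism `γ` anywhere inside a composition
`φ = φ_{n-1} ∘ ⋯ ∘ φ₀` with total `C¹`-nonlinearity at most `λ` changes the
nonlinearity of the composition by at most `K ‖γ‖` in the sup norm. -/
theorem sandwich_lemma :
    ∀ lam : ℝ, 0 < lam → ∃ K : ℝ, ∀ n : ℕ, 1 ≤ n → ∀ i : ℕ, i ≤ n →
      ∀ φs : ℕ → ℝ → ℝ, ∀ γ : ℝ → ℝ,
        (∀ j < n, IsDk 3 (φs j)) → IsDk 3 γ →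
        nlNorm1 γ + ∑ j ∈ Finset.range n, nlNorm1 (φs j) ≤ lam →
        (⨆ x : Icc (0 : ℝ) 1,
          |nonlin (compFrom φs i (n - i) ∘ γ ∘ compFrom φs 0 i) x.1 -
            nonlin (compFrom φs 0 n) x.1|) ≤ K * nlNorm γ := by
  intro lam _
  refine ⟨sandwichConst lam, fun n _ i hin φs γ hφs hγ hsum => sandwich_lemma_general hin
    (fun j hj => (hφs j (hj.trans_le hin)).of_le (by norm_num)) (fun j _ => hφs j)
    (hγ.of_le (by norm_num)) (le_trans ?_ hsum)⟩
  rw [← Finset.sum_range_add_sum_Ico _ hin]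
  gcongr <;> exact nlNorm_le_nlNorm1 _

end
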